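/- Let A be a C*-algebra and assume that π : A → B(H) is an irreducible representation of A on an infinite-dimensional Hilbert space H. Then the Lebesgue decomposition of positive functionals over A is not unique; indeed, there exist nonzero positive functionals f, g, p on A with p ≤ f, f absolutely continuous with respect to g, and p singular to g. -/

import Mathlib

/-!
For a vector `ξ` of an irreducible representation `π`, every positive functional below the vector
functional `ω_ξ` is a multiple of it, by Schur's lemma. A sum `∑ ω_{x k}` is itself a vector
functional, of the infinite amplification of `π` at `x = (x k)`, and the intertwiners from the
amplification to `π` are the maps `x ↦ ∑ s k • x k` with `s ∈ ℓ²`. Hence `ω_ξ ⊥ ∑ ω_{x k}` unless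
`ξ` is an `ℓ²`-combination of the `x k`.

Absolute continuity is more permissive: `∑ ω_{y k} + ω_ξ ≪ ∑ ω_{x k}` as soon as every `y k` lies
in the span of the `x k` and `ξ` is an `ℓ²`-combination of the `y k`. For an orthonormal sequence
`e`, the choice `y k = 2⁻ᵏ • e k`, `x k = 4⁻ᵏ • e k`, `ξ = ∑ 4⁻ᵏ • e k` satisfies both conditions.
-/

open scoped ComplexOrder

section CStarDefs

variable {A : Type} [NonUnitalCStarAlgebra A]

/-- A linear functional on a C⋆-algebra is positive if `0 ≤ f (a⋆ * a)` for every `a`. -/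
def IsPosFnC (f : A →ₗ[ℂ] ℂ) : Prop := ∀ a : A, 0 ≤ f (star a * a)

/-- Order on positive functionals: `f ≤ g` iff `g - f` is positive. -/
def FnLEC (f g : A →ₗ[ℂ] ℂ) : Prop := IsPosFnC (g - f)

/-- Absolute continuity `f ≪ g` for positive functionals on a C⋆-algebra: `f` is the
pointwise limit of an increasing sequence of positive functionals `fₙ` with `fₙ ≤ αₙ • g`
for some positive reals `αₙ`. -/
def AbsContC (f g : A →ₗ[ℂ] ℂ) : Prop :=
  ∃ (fn : ℕ → (A →ₗ[ℂ] ℂ)) (α : ℕ → ℝ),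
    (∀ n, IsPosFnC (fn n)) ∧
    (∀ n, 0 < α n) ∧
    (∀ n, FnLEC (fn n) (fn (n + 1))) ∧
    (∀ n, FnLEC (fn n) (((α n : ℂ)) • g)) ∧
    (∀ a : A, Filter.Tendsto (fun n => fn n a) Filter.atTop (nhds (f a)))

/-- Singularity `f ⊥ g`: the only positive functional dominated by both `f` and `g`
is `0`. -/
def SingularC (f g : A →ₗ[ℂ] ℂ) : Prop :=
  ∀ p : A →ₗ[ℂ] ℂ, IsPosFnC p → FnLEC p f → FnLEC p g → p = 0

/-- `f = fr + fs` is a Lebesgue decomposition of `f` with respect to `g`. -/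
def IsLebDecompC (f g fr fs : A →ₗ[ℂ] ℂ) : Prop :=
  IsPosFnC fr ∧ IsPosFnC fs ∧ f = fr + fs ∧ AbsContC fr g ∧ SingularC fs g

/-- The Lebesgue decomposition of `f` with respect to `g` is unique. -/
def LebDecompUniqueForC (f g : A →ₗ[ℂ] ℂ) : Prop :=
  ∀ fr fs fr' fs' : A →ₗ[ℂ] ℂ, IsLebDecompC f g fr fs → IsLebDecompC f g fr' fs' →
    fr = fr' ∧ fs = fs'

end CStarDefs

/-- The Lebesgue decomposition of positive functionals over the C⋆-algebra `A` is unique. -/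
def LebDecompUniqueC (A : Type) [NonUnitalCStarAlgebra A] : Prop :=
  ∀ f g : A →ₗ[ℂ] ℂ, IsPosFnC f → IsPosFnC g → LebDecompUniqueForC f g

/-- An irreducible representation of a C⋆-algebra: a nonzero `⋆`-representation whose only
closed invariant subspaces are `{0}` and `H`. -/
def IsIrredRepC {A : Type} [NonUnitalCStarAlgebra A]
    {H : Type} [NormedAddCommGroup H] [InnerProductSpace ℂ H] [CompleteSpace H]
    (π : A →⋆ₙₐ[ℂ] (H →L[ℂ] H)) : Prop :=
  π ≠ 0 ∧
    ∀ S : Submodule ℂ H, IsClosed (S : Set H) →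
      (∀ a : A, ∀ x ∈ S, π a x ∈ S) → S = ⊥ ∨ S = ⊤

open scoped InnerProductSpace

lemma inv_add_sq_mul_norm_sq_le {𝕜 E : Type*} [NormedField 𝕜] [SeminormedAddCommGroup E]
    [NormedSpace 𝕜 E] {τ : ℝ} (hτ : 0 < τ) (c : 𝕜) (u v : E) :
    (‖c‖ ^ 2 + τ)⁻¹ * ‖u‖ ^ 2 ≤ ‖v‖ ^ 2 + τ⁻¹ * ‖u + c • v‖ ^ 2 := by
  have norm_u_le : ‖u‖ ≤ ‖u + c • v‖ + ‖c‖ * ‖v‖ := by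
    rw [← norm_smul]
    exact norm_le_add_norm_add u (c • v)
  have cauchy_schwarz :
      (‖u + c • v‖ + ‖c‖ * ‖v‖) ^ 2 ≤ (‖c‖ ^ 2 + τ) * (‖v‖ ^ 2 + τ⁻¹ * ‖u + c • v‖ ^ 2) := by
    generalize ‖u + c • v‖ = r, ‖c‖ = s, ‖v‖ = t
    have : (s ^ 2 + τ) * (t ^ 2 + τ⁻¹ * r ^ 2) - (r + s * t) ^ 2 = τ⁻¹ * (s * r - τ * t) ^ 2 := by
      field_simp
      ring
    linarith [show 0 ≤ τ⁻¹ * (s * r - τ * t) ^ 2 by positivity]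
  rw [inv_mul_le_iff₀ (by positivity)]
  exact (pow_le_pow_left₀ (norm_nonneg u) norm_u_le 2).trans cauchy_schwarz

lemma exists_pos_eq_add_succ_tendsto_one {u : ℕ → ℝ} (hu0 : ∀ n, 0 ≤ u n) (hu : Summable u) :
    ∃ τ : ℕ → ℝ, (∀ n, 0 < τ n) ∧ (∀ n, τ n = u n + τ (n + 1)) ∧
      Filter.Tendsto τ Filter.atTop (nhds 1) := by
  refine ⟨fun n ↦ 1 + ∑' k, u (k + n), fun n ↦ ?_, fun n ↦ ?_, ?_⟩
  · exact add_pos_of_pos_of_nonneg one_pos (tsum_nonneg fun k ↦ hu0 (k + n))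
  · simp only [((summable_nat_add_iff n).2 hu).tsum_eq_zero_add, zero_add, add_right_comm,
      add_assoc, add_left_comm]
  · simpa using (tendsto_sum_nat_add u).const_add 1

lemma exists_orthonormal_nat {𝕜 E : Type*} [RCLike 𝕜] [NormedAddCommGroup E]
    [InnerProductSpace 𝕜 E] (hE : ¬ FiniteDimensional 𝕜 E) : ∃ e : ℕ → E, Orthonormal 𝕜 e := by
  let b := Module.Basis.ofVectorSpace 𝕜 E
  have : Infinite (Module.Basis.ofVectorSpaceIndex 𝕜 E) := by
    by_contra h
    have := not_infinite_iff_finite.1 h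
    exact hE (Module.Finite.of_basis b)
  exact ⟨_, InnerProductSpace.gramSchmidtNormed_orthonormal <|
    b.linearIndependent.comp _ (Infinite.natEmbedding _).injective⟩

lemma inner_eq_of_hasSum_smul_orthonormal {𝕜 E ι : Type*} [RCLike 𝕜] [NormedAddCommGroup E]
    [InnerProductSpace 𝕜 E] {e : ι → E} (he : Orthonormal 𝕜 e) {c : ι → 𝕜} {ξ : E}
    (hξ : HasSum (fun i ↦ c i • e i) ξ) (i : ι) : ⟪e i, ξ⟫_𝕜 = c i := by
  have inner_sum : HasSum (fun j ↦ ⟪e i, c j • e j⟫_𝕜) ⟪e i, ξ⟫_𝕜 := (innerSL 𝕜 (e i)).hasSum hξ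
  have inner_eq_zero (j : ι) (hj : j ≠ i) : ⟪e i, c j • e j⟫_𝕜 = 0 := by
    rw [inner_smul_right, he.2 hj.symm, mul_zero]
  have inner_self_eq : ⟪e i, c i • e i⟫_𝕜 = c i := by
    rw [inner_smul_right, inner_self_eq_norm_sq_to_K, he.1, RCLike.ofReal_one, one_pow, mul_one]
  exact (inner_sum.unique (hasSum_single i inner_eq_zero)).trans inner_self_eq

lemma memℓp_two_smul_orthonormal {𝕜 E ι : Type*} [RCLike 𝕜] [NormedAddCommGroup E]
    [InnerProductSpace 𝕜 E] {e : ι → E} (he : Orthonormal 𝕜 e) {c : ι → 𝕜}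
    (hc : Summable fun i ↦ ‖c i‖ ^ 2) : Memℓp (fun i ↦ c i • e i) 2 :=
  memℓp_gen <| by simpa only [norm_smul, he.1, mul_one, ENNReal.toReal_ofNat, Real.rpow_ofNat]

section PositiveFunctionals

variable {A : Type} [NonUnitalCStarAlgebra A] {f g h p q : A →ₗ[ℂ] ℂ}

lemma eq_zero_of_apply_star_mul_self_eq_zero (hq : ∀ a, q (star a * a) = 0) : q = 0 := by
  let _ := CStarAlgebra.spectralOrder A
  have := CStarAlgebra.spectralOrderedRing A
  have span_le_ker : Submodule.span ℂ {a : A | 0 ≤ a} ≤ LinearMap.ker q := by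
    refine Submodule.span_le.2 fun a (ha : 0 ≤ a) ↦ ?_
    obtain ⟨b, rfl⟩ := CStarAlgebra.nonneg_iff_eq_star_mul_self.1 ha
    exact hq b
  rwa [CStarAlgebra.span_nonneg, top_le_iff, LinearMap.ker_eq_top] at span_le_ker

lemma eq_of_apply_star_mul_self_eq (hfg : ∀ a, f (star a * a) = g (star a * a)) : f = g :=
  sub_eq_zero.1 <| eq_zero_of_apply_star_mul_self_eq_zero fun a ↦ by simp [hfg a]

lemma fnLEC_iff : FnLEC f g ↔ ∀ a, f (star a * a) ≤ g (star a * a) := by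
  simp only [FnLEC, IsPosFnC, LinearMap.sub_apply, sub_nonneg]

lemma isPosFnC_zero : IsPosFnC (0 : A →ₗ[ℂ] ℂ) := fun _ ↦ le_rfl

lemma IsPosFnC.add (hf : IsPosFnC f) (hg : IsPosFnC g) : IsPosFnC (f + g) :=
  fun a ↦ add_nonneg (hf a) (hg a)

lemma IsPosFnC.smul {c : ℝ} (hc : 0 ≤ c) (hf : IsPosFnC f) : IsPosFnC ((c : ℂ) • f) :=
  fun a ↦ mul_nonneg (Complex.zero_le_real.2 hc) (hf a)

lemma IsPosFnC.sum {ι : Type*} {s : Finset ι} {φ : ι → A →ₗ[ℂ] ℂ}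
    (hφ : ∀ i ∈ s, IsPosFnC (φ i)) : IsPosFnC (∑ i ∈ s, φ i) :=
  Finset.sum_induction φ IsPosFnC (fun _ _ ↦ IsPosFnC.add) isPosFnC_zero hφ

lemma IsPosFnC.fnLEC_add_left (hf : IsPosFnC f) : FnLEC p (f + p) := by
  rwa [FnLEC, add_sub_cancel_right]

lemma IsPosFnC.eq_zero_of_fnLEC_zero (hf : IsPosFnC f) (hf0 : FnLEC f 0) : f = 0 :=
  eq_zero_of_apply_star_mul_self_eq_zero fun a ↦ le_antisymm (fnLEC_iff.1 hf0 a) (hf a)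

lemma singularC_zero_left : SingularC 0 g := fun _ hq hq0 _ ↦ hq.eq_zero_of_fnLEC_zero hq0

lemma not_absContC_zero_right (hf : f ≠ 0) : ¬ AbsContC f 0 := by
  rintro ⟨φ, α, φ_pos, -, -, φ_le, φ_tendsto⟩
  have φ_eq_zero (n : ℕ) : φ n = 0 := (φ_pos n).eq_zero_of_fnLEC_zero (by simpa using φ_le n)
  refine hf (LinearMap.ext fun a ↦ tendsto_nhds_unique (φ_tendsto a) ?_)
  simp [φ_eq_zero]

/-- Both `(h + p) + 0` and `h + p` are Lebesgue decompositions of `h + p`. -/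
lemma not_lebDecompUniqueC (hh : IsPosFnC h) (hp : IsPosFnC p) (hg : IsPosFnC g) (hp0 : p ≠ 0)
    (h_absCont : AbsContC h g) (h_add_absCont : AbsContC (h + p) g) (p_singular : SingularC p g) :
    ¬ LebDecompUniqueC A := fun unique ↦
  hp0 <| Eq.symm <| And.right <| unique (h + p) g (hh.add hp) hg (h + p) 0 h p
    ⟨hh.add hp, isPosFnC_zero, (add_zero _).symm, h_add_absCont, singularC_zero_left⟩
    ⟨hh, hp, rfl, h_absCont, p_singular⟩

/-- Domination of functionals up to a constant: `q ≤ α g` for some `α > 0`, which is what absolute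
continuity with respect to `g` asks of each approximating functional. -/
def IsDominatedBy (q g : A →ₗ[ℂ] ℂ) : Prop := ∃ α : ℝ, 0 < α ∧ FnLEC q ((α : ℂ) • g)

namespace IsDominatedBy

lemma zero_left (hg : IsPosFnC g) : IsDominatedBy 0 g :=
  ⟨1, one_pos, by simpa [FnLEC] using hg⟩

lemma add (hf : IsDominatedBy f g) (hh : IsDominatedBy h g) : IsDominatedBy (f + h) g := by
  obtain ⟨α, hα, hfα⟩ := hf
  obtain ⟨β, hβ, hhβ⟩ := hh
  refine ⟨α + β, add_pos hα hβ, ?_⟩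
  rw [FnLEC, Complex.ofReal_add, add_smul, add_sub_add_comm]
  exact IsPosFnC.add hfα hhβ

lemma smul {c : ℝ} (hc : 0 < c) (hf : IsDominatedBy f g) : IsDominatedBy ((c : ℂ) • f) g := by
  obtain ⟨α, hα, hfα⟩ := hf
  refine ⟨c * α, mul_pos hc hα, ?_⟩
  rw [FnLEC, Complex.ofReal_mul, mul_smul, ← smul_sub]
  exact IsPosFnC.smul hc.le hfα

lemma sum {ι : Type*} {s : Finset ι} {φ : ι → A →ₗ[ℂ] ℂ} (hg : IsPosFnC g)
    (hφ : ∀ i ∈ s, IsDominatedBy (φ i) g) : IsDominatedBy (∑ i ∈ s, φ i) g :=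
  Finset.sum_induction φ (IsDominatedBy · g) (fun _ _ ↦ add) (zero_left hg) hφ

end IsDominatedBy

end PositiveFunctionals

section Representations

variable {𝕜 A H K : Type*} [RCLike 𝕜] [NonUnitalRing A] [StarRing A] [Module 𝕜 A]
  [NormedAddCommGroup H] [InnerProductSpace 𝕜 H] [CompleteSpace H]
  [NormedAddCommGroup K] [InnerProductSpace 𝕜 K] [CompleteSpace K]
  (π : A →⋆ₙₐ[𝕜] (H →L[𝕜] H)) (ρ : A →⋆ₙₐ[𝕜] (K →L[𝕜] K))

lemma inner_map_star_apply (a : A) (x y : H) : ⟪π (star a) x, y⟫_𝕜 = ⟪x, π a y⟫_𝕜 := by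
  rw [map_star, ContinuousLinearMap.star_eq_adjoint, ContinuousLinearMap.adjoint_inner_left]

lemma map_mem_orthogonal {M : Submodule 𝕜 H} (hM : ∀ a, ∀ x ∈ M, π a x ∈ M) (a : A) {x : H}
    (hx : x ∈ Mᗮ) : π a x ∈ Mᗮ := fun y hy ↦ by
  rw [← inner_map_star_apply]
  exact hx _ (hM _ y hy)

lemma map_mem_topologicalClosure_range {J : A →ₗ[𝕜] H} (hJ : ∀ a b, J (a * b) = π a (J b))
    (a : A) {x : H} (hx : x ∈ J.range.topologicalClosure) :
    π a x ∈ J.range.topologicalClosure := by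
  refine Set.MapsTo.closure ?_ (π a).continuous hx
  rintro _ ⟨b, rfl⟩
  exact ⟨a * b, hJ a b⟩

/-- The intertwiner vanishes on `(range J)ᗮ`, which is invariant because `ρ` is a
`⋆`-representation. -/
lemma exists_intertwiner_of_norm_le {J : A →ₗ[𝕜] K} {L : A →ₗ[𝕜] H}
    (hJ : ∀ a b, J (a * b) = ρ a (J b)) (hL : ∀ a b, L (a * b) = π a (L b)) {C : ℝ}
    (hLJ : ∀ a, ‖L a‖ ≤ C * ‖J a‖) :
    ∃ V : K →L[𝕜] H, (∀ a, V (J a) = L a) ∧ ∀ a y, V (ρ a y) = π a (V y) := by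
  let M : Submodule 𝕜 K := J.range.topologicalClosure
  let JM : A →ₗ[𝕜] M := J.codRestrict M fun a ↦ subset_closure ⟨a, rfl⟩
  have JM_dense : DenseRange JM := by
    refine Subtype.dense_iff.2 fun y hy ↦ closure_mono ?_ hy
    rintro _ ⟨a, rfl⟩
    exact ⟨JM a, ⟨a, rfl⟩, rfl⟩
  let V₀ : M →L[𝕜] H := L.extendOfNorm JM
  let V : K →L[𝕜] H := V₀ ∘L M.orthogonalProjectionOnto
  have V_apply (a : A) : V (J a) = L a := by
    rw [← L.extendOfNorm_eq JM_dense ⟨C, hLJ⟩ a]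
    exact congrArg V₀ (M.orthogonalProjectionOnto_mem_subspace_eq_self (JM a))
  have V_eq_zero {y : K} (hy : y ∈ Mᗮ) : V y = 0 := by
    rw [ContinuousLinearMap.comp_apply, Submodule.orthogonalProjectionOnto_eq_zero_iff.2 hy,
      map_zero]
  have M_invariant (a : A) : ∀ y ∈ M, ρ a y ∈ M := fun y ↦ map_mem_topologicalClosure_range ρ hJ a
  refine ⟨V, V_apply, fun a y ↦ ?_⟩
  have eqOn_range : Set.EqOn (V ∘L ρ a) (π a ∘L V) J.range := by
    rintro _ ⟨b, rfl⟩
    simp only [ContinuousLinearMap.comp_apply, ← hJ, V_apply, hL]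
  have eqOn_M : Set.EqOn (V ∘L ρ a) (π a ∘L V) M :=
    eqOn_range.closure (V ∘L ρ a).continuous (π a ∘L V).continuous
  have y_decomp : y ∈ M ⊔ Mᗮ := by rw [Submodule.sup_orthogonal_of_hasOrthogonalProjection]; trivial
  obtain ⟨u, hu, w, hw, rfl⟩ := Submodule.mem_sup.1 y_decomp
  have eq_on_u : V (ρ a u) = π a (V u) := eqOn_M hu
  simp only [map_add, eq_on_u, V_eq_zero hw, V_eq_zero (map_mem_orthogonal ρ M_invariant a hw),
    map_zero]

lemma adjoint_apply_map_apply {V : K →L[𝕜] H} (hV : ∀ a y, V (ρ a y) = π a (V y)) (a : A)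
    (x : H) : V.adjoint (π a x) = ρ a (V.adjoint x) := by
  refine ext_inner_right 𝕜 fun y ↦ ?_
  rw [ContinuousLinearMap.adjoint_inner_left, ← star_star a, inner_map_star_apply,
    inner_map_star_apply, ContinuousLinearMap.adjoint_inner_left, hV]

/-- The linear map `a ↦ π(a)x` attached to a vector `x` of a representation `π`; norm inequalities
between two such maps produce intertwiners. -/
noncomputable def orbitMap (x : H) : A →ₗ[𝕜] H where
  toFun a := π a x
  map_add' a b := by rw [map_add, add_apply]
  map_smul' c a := by rw [map_smul, smul_apply, RingHom.id_apply]

lemma orbitMap_apply (x : H) (a : A) : orbitMap π x a = π a x := rfl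

lemma orbitMap_mul (x : H) (a b : A) : orbitMap π x (a * b) = π a (orbitMap π x b) := by
  simp only [orbitMap_apply, map_mul, mul_apply_eq_comp]

/-- The `ι`-fold amplification of a representation `π` on `H`, acting coordinatewise on
`ℓ²(ι, H)`. It turns sums of vector functionals into single vector functionals. -/
noncomputable def ampliation (ι : Type*) :
    A →⋆ₙₐ[𝕜] (lp (fun _ : ι ↦ H) 2 →L[𝕜] lp (fun _ : ι ↦ H) 2) where
  toFun a := lp.mapCLM 2 (fun _ ↦ π a) (norm_nonneg _) fun _ ↦ le_rfl
  map_smul' c a := by ext; simp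
  map_zero' := by ext; simp
  map_add' a b := by ext; simp
  map_mul' a b := by ext; simp
  map_star' a := by
    refine (ContinuousLinearMap.eq_adjoint_iff _ _).2 fun x y ↦ ?_
    simp only [lp.inner_eq_tsum, lp.mapCLM_apply_coe, inner_map_star_apply]

lemma ampliation_apply {ι : Type*} (a : A) (x : lp (fun _ : ι ↦ H) 2) (i : ι) :
    ampliation π ι a x i = π a (x i) := rfl

lemma ampliation_apply_single {ι : Type*} [DecidableEq ι] (a : A) (i : ι) (y : H) :
    ampliation π ι a (lp.single 2 i y) = lp.single 2 i (π a y) := by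
  ext j
  rw [ampliation_apply, lp.single_apply, lp.single_apply]
  exact Pi.apply_single (fun _ ↦ π a) (fun _ ↦ map_zero _) i y j

end Representations

namespace IsIrredRepC

variable {A : Type} [NonUnitalCStarAlgebra A]
  {H : Type} [NormedAddCommGroup H] [InnerProductSpace ℂ H] [CompleteSpace H]
  {π : A →⋆ₙₐ[ℂ] (H →L[ℂ] H)}

lemma eq_zero_of_forall_map_apply_eq_zero (hπ : IsIrredRepC π) {x : H}
    (hx : ∀ a, π a x = 0) : x = 0 := by
  let N : Submodule ℂ H := ⨅ a, (π a).ker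
  have mem_N {y : H} : y ∈ N ↔ ∀ a, π a y = 0 := by
    simp only [N, Submodule.mem_iInf, LinearMap.mem_ker, ContinuousLinearMap.coe_coe]
  have N_closed : IsClosed (N : Set H) := by
    rw [Submodule.coe_iInf]
    exact isClosed_iInter fun a ↦ (π a).isClosed_ker
  have N_invariant (a : A) (y : H) (hy : y ∈ N) : π a y ∈ N := by
    rw [mem_N.1 hy a]
    exact N.zero_mem
  rcases hπ.2 N N_closed N_invariant with N_eq_bot | N_eq_top
  · exact (Submodule.eq_bot_iff N).1 N_eq_bot x (mem_N.2 hx)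
  · refine absurd (DFunLike.ext _ _ fun a ↦ ContinuousLinearMap.ext fun y ↦ ?_) hπ.1
    exact mem_N.1 (N_eq_top ▸ Submodule.mem_top) a

lemma nontrivial (hπ : IsIrredRepC π) : Nontrivial H := by
  by_contra h
  have := not_nontrivial_iff_subsingleton.1 h
  exact hπ.1 (DFunLike.ext _ _ fun a ↦ Subsingleton.elim _ _)

lemma eq_zero_or_ker_eq_bot (hπ : IsIrredRepC π) {T : H →L[ℂ] H}
    (hT : ∀ a, Commute T (π a)) : T = 0 ∨ T.ker = ⊥ := by
  have ker_invariant (a : A) (y : H) (hy : y ∈ T.ker) : π a y ∈ T.ker := by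
    have hTy : T y = 0 := hy
    change (T * π a) y = 0
    rw [hT a, mul_apply_eq_comp, hTy, map_zero]
  refine (hπ.2 T.ker T.isClosed_ker ker_invariant).symm.imp_left fun ker_eq_top ↦ ?_
  exact ContinuousLinearMap.ext fun y ↦ (ker_eq_top ▸ Submodule.mem_top : y ∈ T.ker)

open scoped ContinuousFunctionalCalculus in
lemma nonpos_or_nonneg (hπ : IsIrredRepC π) {S : H →L[ℂ] H} (hS : IsSelfAdjoint S)
    (hSπ : ∀ a, Commute S (π a)) : S ≤ 0 ∨ 0 ≤ S := by
  have posPart_comm (a : A) : Commute S⁺ (π a) := (hSπ a).cfcₙ_real _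
  refine (hπ.eq_zero_or_ker_eq_bot posPart_comm).imp ?_ fun ker_eq_bot ↦ ?_
  · exact (CFC.posPart_eq_zero_iff S hS).1
  · refine (CFC.negPart_eq_zero_iff S hS).1 (ContinuousLinearMap.ext fun y ↦ ?_)
    have : S⁻ y ∈ S⁺.ker := DFunLike.congr_fun (CFC.posPart_mul_negPart S) y
    rwa [ker_eq_bot] at this

lemma exists_eq_algebraMap_of_isSelfAdjoint (hπ : IsIrredRepC π) {S : H →L[ℂ] H}
    (hS : IsSelfAdjoint S) (hSπ : ∀ a, Commute S (π a)) :
    ∃ r : ℝ, S = algebraMap ℝ (H →L[ℂ] H) r := by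
  have := hπ.nontrivial
  have spectrum_le {k l : ℝ} (hk : k ∈ spectrum ℝ S) (hl : l ∈ spectrum ℝ S) : k ≤ l := by
    by_contra! hlk
    obtain ⟨m, hlm, hmk⟩ := exists_between hlk
    have S_sub_comm (a : A) : Commute (S - algebraMap ℝ _ m) (π a) :=
      (hSπ a).sub_left (Algebra.commute_algebraMap_left m (π a))
    rcases hπ.nonpos_or_nonneg (hS.sub (.algebraMap _ (.all m))) S_sub_comm with h | h
    · exact hmk.not_ge <| (le_algebraMap_iff_spectrum_le hS).1 (sub_nonpos.1 h) k hk
    · exact hlm.not_ge <| (algebraMap_le_iff_le_spectrum hS).1 (sub_nonneg.1 h) l hl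
  obtain ⟨r, hr⟩ := ContinuousFunctionalCalculus.spectrum_nonempty (R := ℝ) S hS
  exact ⟨r, CFC.eq_algebraMap_of_spectrum_subset_singleton S r fun l hl ↦
    le_antisymm (spectrum_le hl hr) (spectrum_le hr hl)⟩

open scoped ComplexStarModule in
lemma exists_eq_smul_one (hπ : IsIrredRepC π) {T : H →L[ℂ] H} (hT : ∀ a, Commute T (π a)) :
    ∃ c : ℂ, T = c • (1 : H →L[ℂ] H) := by
  have star_T_comm (a : A) : Commute (star T) (π a) := by
    have := (hT (star a)).star_star
    rwa [← map_star, star_star] at this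
  have re_comm (a : A) : Commute (ℜ T : H →L[ℂ] H) (π a) := by
    rw [realPart_apply_coe]
    exact ((hT a).add_left (star_T_comm a)).smul_left _
  have im_comm (a : A) : Commute (ℑ T : H →L[ℂ] H) (π a) := by
    rw [imaginaryPart_apply_coe]
    exact (((hT a).sub_left (star_T_comm a)).smul_left _).smul_left _
  obtain ⟨r, hr⟩ := hπ.exists_eq_algebraMap_of_isSelfAdjoint (ℜ T).2 re_comm
  obtain ⟨s, hs⟩ := hπ.exists_eq_algebraMap_of_isSelfAdjoint (ℑ T).2 im_comm
  refine ⟨r + Complex.I * s, ?_⟩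
  rw [← realPart_add_I_smul_imaginaryPart T, hr, hs, Algebra.algebraMap_eq_smul_one,
    Algebra.algebraMap_eq_smul_one, add_smul, mul_smul, Complex.coe_smul, Complex.coe_smul]

end IsIrredRepC

section VectorFunctionals

variable {A : Type} [NonUnitalCStarAlgebra A]
  {H K : Type*} [NormedAddCommGroup H] [InnerProductSpace ℂ H] [CompleteSpace H]
  [NormedAddCommGroup K] [InnerProductSpace ℂ K] [CompleteSpace K]
  (π : A →⋆ₙₐ[ℂ] (H →L[ℂ] H)) (ρ : A →⋆ₙₐ[ℂ] (K →L[ℂ] K))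

/-- The vector functional `ω_x : a ↦ ⟪x, π(a)x⟫` of a representation `π`. -/
noncomputable def vectorFunctional (x : H) : A →ₗ[ℂ] ℂ := (innerSL ℂ x).toLinearMap ∘ₗ orbitMap π x

lemma vectorFunctional_apply (x : H) (a : A) : vectorFunctional π x a = ⟪x, π a x⟫_ℂ := rfl

lemma vectorFunctional_star_mul (x : H) (a b : A) :
    vectorFunctional π x (star a * b) = ⟪π a x, π b x⟫_ℂ := by
  rw [vectorFunctional_apply, map_mul, mul_apply_eq_comp, ← inner_map_star_apply, star_star]

lemma vectorFunctional_star_mul_self (x : H) (a : A) :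
    vectorFunctional π x (star a * a) = ((‖π a x‖ ^ 2 : ℝ) : ℂ) := by
  rw [vectorFunctional_star_mul, inner_self_eq_norm_sq_to_K, Complex.ofReal_pow]
  rfl

lemma isPosFnC_vectorFunctional (x : H) : IsPosFnC (vectorFunctional π x) := fun a ↦ by
  rw [vectorFunctional_star_mul_self, Complex.zero_le_real]
  positivity

lemma vectorFunctional_zero : vectorFunctional π 0 = 0 :=
  LinearMap.ext fun a ↦ inner_zero_left (π a 0)

lemma continuous_vectorFunctional_apply (a : A) : Continuous fun x ↦ vectorFunctional π x a :=
  continuous_id.inner (π a).continuous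

lemma fnLEC_vectorFunctional_smul_iff {x : K} {y : H} {C : ℝ} :
    FnLEC (vectorFunctional π y) ((C : ℂ) • vectorFunctional ρ x) ↔
      ∀ a, ‖π a y‖ ^ 2 ≤ C * ‖ρ a x‖ ^ 2 := by
  simp only [fnLEC_iff, LinearMap.smul_apply, smul_eq_mul, vectorFunctional_star_mul_self,
    ← Complex.ofReal_mul, Complex.real_le_real]

lemma hasSum_vectorFunctional {ι : Type*} (x : lp (fun _ : ι ↦ H) 2) (a : A) :
    HasSum (fun i ↦ vectorFunctional π (x i) a) (vectorFunctional (ampliation π ι) x a) :=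
  lp.hasSum_inner x (ampliation π ι a x)

lemma exists_forall_norm_le_of_mem_span {ι : Type*} {x : lp (fun _ : ι ↦ H) 2} {y : H}
    (hy : y ∈ Submodule.span ℂ (Set.range x)) :
    ∃ C : ℝ, ∀ a, ‖π a y‖ ≤ C * ‖ampliation π ι a x‖ := by
  induction hy using Submodule.span_induction with
  | mem y hy =>
    obtain ⟨i, rfl⟩ := hy
    refine ⟨1, fun a ↦ ?_⟩
    rw [one_mul, ← ampliation_apply]
    exact lp.norm_apply_le_norm two_ne_zero _ i
  | zero => exact ⟨0, fun a ↦ by rw [map_zero, norm_zero, zero_mul]⟩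
  | add y z _ _ hy hz =>
    obtain ⟨C, hC⟩ := hy
    obtain ⟨D, hD⟩ := hz
    refine ⟨C + D, fun a ↦ ?_⟩
    rw [map_add, add_mul]
    exact norm_add_le_of_le (hC a) (hD a)
  | smul c y _ hy =>
    obtain ⟨C, hC⟩ := hy
    refine ⟨‖c‖ * C, fun a ↦ ?_⟩
    rw [map_smul, norm_smul, mul_assoc]
    exact mul_le_mul_of_nonneg_left (hC a) (norm_nonneg c)

lemma isDominatedBy_vectorFunctional_of_mem_span {ι : Type*} {x : lp (fun _ : ι ↦ H) 2} {y : H}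
    (hy : y ∈ Submodule.span ℂ (Set.range x)) :
    IsDominatedBy (vectorFunctional π y) (vectorFunctional (ampliation π ι) x) := by
  obtain ⟨C, hC⟩ := exists_forall_norm_le_of_mem_span π hy
  refine ⟨C ^ 2 + 1, by positivity, (fnLEC_vectorFunctional_smul_iff _ _).2 fun a ↦ ?_⟩
  calc ‖π a y‖ ^ 2 ≤ (C * ‖ampliation π ι a x‖) ^ 2 := by gcongr; exact hC a
    _ = C ^ 2 * ‖ampliation π ι a x‖ ^ 2 := mul_pow _ _ 2
    _ ≤ (C ^ 2 + 1) * ‖ampliation π ι a x‖ ^ 2 := by gcongr; exact (lt_add_one _).le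

/-- The approximating functionals are `∑_{k<n} ω_{y k} + (τ n)⁻¹ ω_{X n}`, where `X n` is the
`n`-th partial sum of `∑ d k • y k` and `τ n = 1 + ∑_{k≥n} ‖d k‖²`. The factor `(τ n)⁻¹` is what
makes them increase. -/
lemma absContC_vectorFunctional_add {ι : Type*} {x : lp (fun _ : ι ↦ H) 2}
    {y : lp (fun _ : ℕ ↦ H) 2} (hy : ∀ k, y k ∈ Submodule.span ℂ (Set.range x)) {d : ℕ → ℂ}
    (hd : Summable fun k ↦ ‖d k‖ ^ 2) {ξ : H} (hξ : HasSum (fun k ↦ d k • y k) ξ) :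
    AbsContC (vectorFunctional (ampliation π ℕ) y + vectorFunctional π ξ)
      (vectorFunctional (ampliation π ι) x) := by
  obtain ⟨τ, τ_pos, τ_succ, τ_tendsto⟩ :=
    exists_pos_eq_add_succ_tendsto_one (fun k ↦ sq_nonneg ‖d k‖) hd
  let X (n : ℕ) : H := ∑ k ∈ Finset.range n, d k • y k
  let φ (n : ℕ) : A →ₗ[ℂ] ℂ := ∑ k ∈ Finset.range n, vectorFunctional π (y k) +
    (((τ n)⁻¹ : ℝ) : ℂ) • vectorFunctional π (X n)
  have φ_pos (n : ℕ) : IsPosFnC (φ n) :=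
    (IsPosFnC.sum fun k _ ↦ isPosFnC_vectorFunctional π (y k)).add <|
      (isPosFnC_vectorFunctional π (X n)).smul (inv_nonneg.2 (τ_pos n).le)
  have φ_dominated (n : ℕ) : IsDominatedBy (φ n) (vectorFunctional (ampliation π ι) x) :=
    (IsDominatedBy.sum (isPosFnC_vectorFunctional _ _) fun k _ ↦
        isDominatedBy_vectorFunctional_of_mem_span π (hy k)).add <|
      (isDominatedBy_vectorFunctional_of_mem_span π <| Submodule.sum_mem _ fun k _ ↦
        Submodule.smul_mem _ (d k) (hy k)).smul (inv_pos.2 (τ_pos n))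
  choose α α_pos φ_le using φ_dominated
  refine ⟨φ, α, φ_pos, α_pos, fun n ↦ fnLEC_iff.2 fun a ↦ ?_, φ_le, fun a ↦ ?_⟩
  · have := inv_add_sq_mul_norm_sq_le (τ_pos (n + 1)) (d n) (π a (X n)) (π a (y n))
    rw [← τ_succ, ← map_smul, ← map_add] at this
    simp only [φ, X, Finset.sum_range_succ, LinearMap.add_apply, LinearMap.smul_apply, smul_eq_mul,
      vectorFunctional_star_mul_self, add_assoc]
    gcongr
    exact_mod_cast this
  · have sum_tendsto := (hasSum_vectorFunctional π y a).tendsto_sum_nat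
    have X_tendsto := ((continuous_vectorFunctional_apply π a).tendsto ξ).comp hξ.tendsto_sum_nat
    have inv_τ_tendsto := (Complex.continuous_ofReal.tendsto _).comp (τ_tendsto.inv₀ one_ne_zero)
    simpa [φ, LinearMap.sum_apply] using sum_tendsto.add (inv_τ_tendsto.mul X_tendsto)

end VectorFunctionals

section IrredFunctionals

variable {A : Type} [NonUnitalCStarAlgebra A]
  {H : Type} [NormedAddCommGroup H] [InnerProductSpace ℂ H] [CompleteSpace H]
  {π : A →⋆ₙₐ[ℂ] (H →L[ℂ] H)}

lemma IsIrredRepC.vectorFunctional_ne_zero (hπ : IsIrredRepC π) {x : H} (hx : x ≠ 0) :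
    vectorFunctional π x ≠ 0 := fun h ↦
  hx <| hπ.eq_zero_of_forall_map_apply_eq_zero fun a ↦ by
    simpa [h] using (vectorFunctional_star_mul_self π x a).symm

lemma IsIrredRepC.exists_eq_smul_vectorFunctional_of_intertwiner (hπ : IsIrredRepC π) {K : Type*}
    [NormedAddCommGroup K] [InnerProductSpace ℂ K] [CompleteSpace K] {ρ : A →⋆ₙₐ[ℂ] (K →L[ℂ] K)}
    {W : H →L[ℂ] K} (hW : ∀ a x, W (π a x) = ρ a (W x)) {q : A →ₗ[ℂ] ℂ} {ξ : H}
    (hq : ∀ a, q (star a * a) = ((‖W (π a ξ)‖ ^ 2 : ℝ) : ℂ)) :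
    ∃ c : ℂ, q = c • vectorFunctional π ξ := by
  have W_adjoint_W_comm (a : A) : Commute (W.adjoint ∘L W) (π a) :=
    ContinuousLinearMap.ext fun x ↦ by
      simp only [mul_apply_eq_comp, ContinuousLinearMap.comp_apply, hW,
        adjoint_apply_map_apply ρ π hW]
  obtain ⟨c, hc⟩ := hπ.exists_eq_smul_one W_adjoint_W_comm
  refine ⟨c, eq_of_apply_star_mul_self_eq fun a ↦ ?_⟩
  calc q (star a * a) = ⟪W (π a ξ), W (π a ξ)⟫_ℂ := by
        rw [hq, inner_self_eq_norm_sq_to_K, Complex.ofReal_pow]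
        rfl
    _ = ⟪π a ξ, (W.adjoint ∘L W) (π a ξ)⟫_ℂ := (W.adjoint_inner_right _ _).symm
    _ = c * ⟪π a ξ, π a ξ⟫_ℂ := by
        rw [hc, smul_apply, one_apply_eq_self, inner_smul_right]
    _ = (c • vectorFunctional π ξ) (star a * a) := by
        rw [LinearMap.smul_apply, smul_eq_mul, vectorFunctional_star_mul]

lemma IsIrredRepC.exists_eq_smul_vectorFunctional (hπ : IsIrredRepC π) {q : A →ₗ[ℂ] ℂ}
    (hq : IsPosFnC q) {ξ : H} (hqξ : FnLEC q (vectorFunctional π ξ)) :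
    ∃ c : ℂ, q = c • vectorFunctional π ξ := by
  let _ := CStarAlgebra.spectralOrder A
  have := CStarAlgebra.spectralOrderedRing A
  have q_nonneg (a : A) (ha : 0 ≤ a) : 0 ≤ q a := by
    obtain ⟨b, rfl⟩ := CStarAlgebra.nonneg_iff_eq_star_mul_self.1 ha
    exact hq b
  let φ : A →ₚ[ℂ] ℂ := .mk₀ q q_nonneg
  let σ := φ.gnsNonUnitalStarAlgHom
  let L : A →ₗ[ℂ] φ.GNS :=
    (UniformSpace.Completion.toComplL (𝕜 := ℂ)).toLinearMap ∘ₗ φ.toPreGNS.toLinearMap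
  have L_mul (a b : A) : L (a * b) = σ a (L b) :=
    (φ.gnsNonUnitalStarAlgHom_apply_coe (b := φ.toPreGNS b)).symm
  have apply_star_mul_self (a : A) : q (star a * a) = ((‖L a‖ ^ 2 : ℝ) : ℂ) := by
    rw [Complex.ofReal_pow]
    refine (φ.preGNS_norm_sq (φ.toPreGNS a)).symm.trans ?_
    rw [← UniformSpace.Completion.norm_coe]
    rfl
  have norm_L_le (a : A) : ‖L a‖ ≤ 1 * ‖orbitMap π ξ a‖ := by
    have := fnLEC_iff.1 hqξ a
    rw [apply_star_mul_self, vectorFunctional_star_mul_self, Complex.real_le_real] at this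
    rw [one_mul]
    exact le_of_sq_le_sq this (norm_nonneg _)
  obtain ⟨W, W_apply, W_map⟩ :=
    exists_intertwiner_of_norm_le σ π (orbitMap_mul π ξ) L_mul norm_L_le
  refine hπ.exists_eq_smul_vectorFunctional_of_intertwiner W_map fun a ↦ ?_
  rw [apply_star_mul_self, ← W_apply, orbitMap_apply]

lemma IsIrredRepC.exists_memℓp_hasSum_of_intertwiner (hπ : IsIrredRepC π) {ι : Type*}
    {V : lp (fun _ : ι ↦ H) 2 →L[ℂ] H} (hV : ∀ a x, V (ampliation π ι a x) = π a (V x)) :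
    ∃ s : ι → ℂ, Memℓp s 2 ∧ ∀ x, HasSum (fun i ↦ s i • x i) (V x) := by
  classical
  let V_at (i : ι) : H →L[ℂ] H := V ∘L lp.singleContinuousLinearMap ℂ (fun _ ↦ H) 2 i
  have V_at_comm (i : ι) (a : A) : Commute (V_at i) (π a) := ContinuousLinearMap.ext fun y ↦ by
    calc V (lp.single 2 i (π a y)) = V (ampliation π ι a (lp.single 2 i y)) := by
          rw [ampliation_apply_single]
      _ = π a (V (lp.single 2 i y)) := hV a _
  choose s hs using fun i ↦ hπ.exists_eq_smul_one (V_at_comm i)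
  have V_single (i : ι) (y : H) : V (lp.single 2 i y) = s i • y := DFunLike.congr_fun (hs i) y
  refine ⟨s, ?_, fun x ↦ ?_⟩
  · have := hπ.nontrivial
    obtain ⟨y, hy⟩ := exists_ne (0 : H)
    have adjoint_coord (i : ι) : V.adjoint y i = (starRingEnd ℂ) (s i) • y :=
      ext_inner_left ℂ fun z ↦ by
        calc ⟪z, V.adjoint y i⟫_ℂ = ⟪V (lp.single 2 i z), y⟫_ℂ := by
              rw [← V.adjoint_inner_right, lp.inner_single_left]
          _ = ⟪z, (starRingEnd ℂ) (s i) • y⟫_ℂ := by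
              rw [V_single, inner_smul_left, inner_smul_right]
    refine ((lp.memℓp (V.adjoint y)).norm.const_mul ‖y‖⁻¹).mono fun i ↦ ?_
    have norm_eq : ‖s i‖ = ‖y‖⁻¹ * ‖V.adjoint y i‖ := by
      rw [adjoint_coord, norm_smul, RCLike.norm_conj, mul_comm ‖s i‖,
        inv_mul_cancel_left₀ (norm_ne_zero_iff.2 hy)]
    exact norm_eq.le
  · simpa only [V_single] using V.hasSum (lp.hasSum_single ENNReal.ofNat_ne_top x)

lemma IsIrredRepC.singularC_vectorFunctional (hπ : IsIrredRepC π) {ι : Type*} {ξ : H}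
    {x : lp (fun _ : ι ↦ H) 2} (hξ : ∀ s : ι → ℂ, Memℓp s 2 → ¬ HasSum (fun i ↦ s i • x i) ξ) :
    SingularC (vectorFunctional π ξ) (vectorFunctional (ampliation π ι) x) := by
  intro q hq hqξ hqx
  obtain ⟨c, rfl⟩ := hπ.exists_eq_smul_vectorFunctional hq hqξ
  by_contra hcω
  have c_ne : c ≠ 0 := fun hc ↦ hcω (by rw [hc, zero_smul])
  have norm_map_le (a : A) : ‖π a ξ‖ ≤ √‖c‖⁻¹ * ‖ampliation π ι a x‖ := by
    have := CStarAlgebra.norm_le_norm_of_nonneg_of_le (hq a) (fnLEC_iff.1 hqx a)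
    rw [LinearMap.smul_apply, norm_smul, vectorFunctional_star_mul_self,
      vectorFunctional_star_mul_self, Complex.norm_real, Complex.norm_real, norm_pow, norm_pow,
      norm_norm, norm_norm] at this
    refine le_of_sq_le_sq ?_ (by positivity)
    rwa [mul_pow, Real.sq_sqrt (by positivity), le_inv_mul_iff₀ (norm_pos_iff.2 c_ne)]
  obtain ⟨V, V_apply, V_map⟩ := exists_intertwiner_of_norm_le π (ampliation π ι)
    (orbitMap_mul (ampliation π ι) x) (orbitMap_mul π ξ) norm_map_le
  obtain ⟨s, hs, hasSum_V⟩ := hπ.exists_memℓp_hasSum_of_intertwiner V_map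
  have Vx_eq : V x = ξ := sub_eq_zero.1 <| hπ.eq_zero_of_forall_map_apply_eq_zero fun a ↦ by
    rw [map_sub, sub_eq_zero, ← V_map]
    exact V_apply a
  exact hξ s hs (Vx_eq ▸ hasSum_V x)

lemma IsIrredRepC.singularC_vectorFunctional_of_orthonormal (hπ : IsIrredRepC π) {ι : Type*}
    [Infinite ι] {e : ι → H} (he : Orthonormal ℂ e) {w : ι → ℂ} (hw : ∀ i, w i ≠ 0)
    {x : lp (fun _ : ι ↦ H) 2} (hx : ∀ i, x i = w i • e i) {ξ : H} (hξ : HasSum x ξ) :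
    SingularC (vectorFunctional π ξ) (vectorFunctional (ampliation π ι) x) := by
  refine hπ.singularC_vectorFunctional fun s hs hsξ ↦ ?_
  have x_eq : (x : ι → H) = fun i ↦ w i • e i := funext hx
  have coeff_eq_one (i : ι) : s i = 1 := by
    simp only [x_eq, smul_smul] at hsξ hξ
    refine (mul_eq_right₀ (hw i)).1 ?_
    rw [← inner_eq_of_hasSum_smul_orthonormal he hsξ, inner_eq_of_hasSum_smul_orthonormal he hξ]
  have summable_one : Summable fun _ : ι ↦ (1 : ℝ) := by
    simpa [coeff_eq_one] using (memℓp_gen_iff (by norm_num)).1 hs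
  exact one_ne_zero ((summable_const_iff _).1 summable_one)

/-- With `y k = w k • e k`, `x k = w k ^ 2 • e k` and `ξ = ∑ w k • y k = ∑ x k`, the functionals are
`g = ω_x`, `h = ω_y` and `p = ω_ξ`: the coefficients of `ξ` along `y` are square-summable, those
along `x` are not. -/
lemma IsIrredRepC.exists_singularC_absContC_add_of_orthonormal (hπ : IsIrredRepC π) {e : ℕ → H}
    (he : Orthonormal ℂ e) {w : ℕ → ℂ} (w_ne : ∀ k, w k ≠ 0)
    (summable_w_sq : Summable fun k ↦ ‖w k‖ ^ 2) :
    ∃ g h p : A →ₗ[ℂ] ℂ, IsPosFnC g ∧ IsPosFnC h ∧ IsPosFnC p ∧ p ≠ 0 ∧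
      AbsContC h g ∧ AbsContC (h + p) g ∧ SingularC p g := by
  have w_sq_ne (k : ℕ) : w k ^ 2 ≠ 0 := pow_ne_zero 2 (w_ne k)
  have summable_norm_w_sq_sq : Summable fun k ↦ ‖w k ^ 2‖ ^ 2 := by
    have summable_mul := summable_w_sq.mul_of_nonneg summable_w_sq (fun _ ↦ sq_nonneg _)
      fun _ ↦ sq_nonneg _
    refine (summable_mul.comp_injective Function.diag_injective).congr fun k ↦ ?_
    rw [norm_pow, sq (‖w k‖ ^ 2)]
    rfl
  let y : lp (fun _ : ℕ ↦ H) 2 :=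
    ⟨fun k ↦ w k • e k, memℓp_two_smul_orthonormal he summable_w_sq⟩
  let x : lp (fun _ : ℕ ↦ H) 2 :=
    ⟨fun k ↦ w k ^ 2 • e k, memℓp_two_smul_orthonormal he summable_norm_w_sq_sq⟩
  have w_smul_y (k : ℕ) : w k • y k = x k := by simp only [x, y, smul_smul, pow_two]
  have y_mem (k : ℕ) : y k ∈ Submodule.span ℂ (Set.range x) := by
    rw [← inv_smul_smul₀ (w_ne k) (y k), w_smul_y]
    exact Submodule.smul_mem _ _ (Submodule.subset_span ⟨k, rfl⟩)
  obtain ⟨ξ, hξ⟩ : Summable x := .of_norm <| by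
    simpa only [x, norm_smul, he.1, mul_one, norm_pow] using summable_w_sq
  have ξ_ne : ξ ≠ 0 := by
    rintro rfl
    have := inner_eq_of_hasSum_smul_orthonormal he hξ 0
    exact w_sq_ne 0 (by rw [← this, inner_zero_right])
  refine ⟨vectorFunctional (ampliation π ℕ) x, vectorFunctional (ampliation π ℕ) y,
    vectorFunctional π ξ, isPosFnC_vectorFunctional _ _, isPosFnC_vectorFunctional _ _,
    isPosFnC_vectorFunctional _ _, hπ.vectorFunctional_ne_zero ξ_ne, ?_, ?_, ?_⟩
  · have := absContC_vectorFunctional_add π y_mem (d := 0) (ξ := 0) (by simp) (by simp)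
    rwa [vectorFunctional_zero, add_zero] at this
  · exact absContC_vectorFunctional_add π y_mem summable_w_sq
      (by simpa only [w_smul_y] using hξ)
  · exact hπ.singularC_vectorFunctional_of_orthonormal he w_sq_ne (fun _ ↦ rfl) hξ

lemma IsIrredRepC.exists_singularC_absContC_add (hπ : IsIrredRepC π)
    (hH : ¬ FiniteDimensional ℂ H) :
    ∃ g h p : A →ₗ[ℂ] ℂ, IsPosFnC g ∧ IsPosFnC h ∧ IsPosFnC p ∧ p ≠ 0 ∧
      AbsContC h g ∧ AbsContC (h + p) g ∧ SingularC p g := by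
  obtain ⟨e, he⟩ := exists_orthonormal_nat hH
  refine hπ.exists_singularC_absContC_add_of_orthonormal he (w := fun k ↦ (1 / 2) ^ k)
    (fun k ↦ pow_ne_zero k (by norm_num)) ?_
  simp only [norm_pow, pow_right_comm _ _ 2]
  exact summable_geometric_of_lt_one (by positivity) (by norm_num)

end IrredFunctionals

/-- **Theorem 2.4**: if a C⋆-algebra `A` admits an irreducible representation on an
infinite-dimensional Hilbert space, then the Lebesgue decomposition of positive functionals
over `A` is not unique; indeed there are nonzero positive functionals `f, g, p` on `A` with
`p ≤ f ≪ g` and `p ⊥ g`. -/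
theorem not_lebesgue_unique_of_infinite_dimensional_irred
    {A : Type} [NonUnitalCStarAlgebra A]
    {H : Type} [NormedAddCommGroup H] [InnerProductSpace ℂ H] [CompleteSpace H]
    (π : A →⋆ₙₐ[ℂ] (H →L[ℂ] H)) (hπ : IsIrredRepC π)
    (hH : ¬ FiniteDimensional ℂ H) :
    ¬ LebDecompUniqueC A ∧
      ∃ f g p : A →ₗ[ℂ] ℂ,
        f ≠ 0 ∧ g ≠ 0 ∧ p ≠ 0 ∧
        IsPosFnC f ∧ IsPosFnC g ∧ IsPosFnC p ∧
        FnLEC p f ∧ AbsContC f g ∧ SingularC p g := by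
  obtain ⟨g, h, p, g_pos, h_pos, p_pos, p_ne, h_absCont, h_add_absCont, p_singular⟩ :=
    hπ.exists_singularC_absContC_add hH
  have p_le : FnLEC p (h + p) := h_pos.fnLEC_add_left
  have h_add_ne : h + p ≠ 0 := fun hp ↦ p_ne (p_pos.eq_zero_of_fnLEC_zero (hp ▸ p_le))
  have g_ne : g ≠ 0 := by
    rintro rfl
    exact not_absContC_zero_right h_add_ne h_add_absCont
  exact ⟨not_lebDecompUniqueC h_pos p_pos g_pos p_ne h_absCont h_add_absCont p_singular,
    h + p, g, p, h_add_ne, g_ne, p_ne, h_pos.add p_pos, g_pos, p_pos, p_le, h_add_absCont,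
    p_singular⟩
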